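/- Let q be a prime power with q ≡ 1 (mod 52). Then (q,13) gives a 3-design if and only if (q,26) gives a 3-design; that is, the PSL(2,q)-orbit of the subgroup of order 13 of F_q^× is the block set of a 3-design on PG(1,q) if and only if the PSL(2,q)-orbit of the subgroup of order 26 of F_q^× is the block set of a 3-design on PG(1,q). -/

import Mathlib

/-!
Setting: `F` is a finite field of order `q`. The projective line `PG(1,q)` is
modelled as `Projectivization F (Fin 2 → F)`. Since scalar matrices act trivially
on the projective line, the images of a set under all elements of `SL(2,F)` form
exactly its `PSL(2,F)`-orbit; `mapSL g` is the map of the projective line induced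
by `g : SL(2,F)`. For `k ∣ q - 1`, the unique subgroup of order `k` of `Fˣ` is the
set of `k`-th roots of unity `{x : F | x ^ k = 1}`, embedded into the projective
line via `x ↦ [x : 1]`. `(q, k)` gives a 3-design iff there is `lam > 0` such that
every 3-subset of the projective line lies in exactly `lam` blocks of the orbit.
-/

noncomputable section

open Matrix

/-- The point at infinity `[1 : 0]` of the projective line over `F`. -/
def inftyPt (F : Type) [Field F] : Projectivization F (Fin 2 → F) :=
  Projectivization.mk F ![1, 0] (by
    intro h
    simpa using congrFun h 0)

/-- The embedding of `F` into the projective line, `x ↦ [x : 1]`. -/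
def embedPt (F : Type) [Field F] (x : F) : Projectivization F (Fin 2 → F) :=
  Projectivization.mk F ![x, 1] (by
    intro h
    simpa using congrFun h 1)

/-- The action of `g : SL(2,F)` on the projective line (as linear fractional
transformation). -/
def mapSL {F : Type} [Field F] (g : Matrix.SpecialLinearGroup (Fin 2) F) :
    Projectivization F (Fin 2 → F) → Projectivization F (Fin 2 → F) :=
  Projectivization.map (Matrix.SpecialLinearGroup.toLin' g : (Fin 2 → F) →ₗ[F] (Fin 2 → F))
    (Matrix.SpecialLinearGroup.toLin' g).injective

/-- The starter block: the unique subgroup of order `k` of `Fˣ` (the `k`-th roots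
of unity, for `k ∣ q - 1`), regarded as a subset of the projective line. -/
def starterB (F : Type) [Field F] (k : ℕ) : Set (Projectivization F (Fin 2 → F)) :=
  embedPt F '' {x : F | x ^ k = 1}

/-- The `PSL(2,F)`-orbit `GB` of the starter block. -/
def designBlocks (F : Type) [Field F] (k : ℕ) :
    Set (Set (Projectivization F (Fin 2 → F))) :=
  {S | ∃ g : Matrix.SpecialLinearGroup (Fin 2) F, S = mapSL g '' starterB F k}

/-- `GB` is the block set of a `3-(q+1, k, lam)` design: `lam` is positive and every
3-subset of the projective line is contained in exactly `lam` blocks. -/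
def isThreeDesign (F : Type) [Field F] (k lam : ℕ) : Prop :=
  0 < lam ∧
    ∀ T : Finset (Projectivization F (Fin 2 → F)), T.card = 3 →
      {S ∈ designBlocks F k | (T : Set (Projectivization F (Fin 2 → F))) ⊆ S}.ncard = lam

/-- `(q, k)` gives a 3-design. -/
def gives3Design (F : Type) [Field F] (k : ℕ) : Prop :=
  ∃ lam : ℕ, isThreeDesign F k lam

/-!
Let `χ` be the quadratic character. The orientation of an ordered triple of distinct points of the
projective line is `χ` of the product of the three cyclically consecutive determinants of
representatives. `SL(2,q)` has exactly two orbits on such triples, told apart by the orientation,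
and both have the same size. Hence the number of translates of `B` containing a triple depends only
on its orientation, and weighted double counting shows that it is constant exactly when the
orientations of the triples in `B` sum to zero.

Let `T(f, g, h)` be the sum of `f a * g b * h c` over `a + b + c = 0` in `ℤ/n`, with `n` odd. For
the `n`-th roots of unity `ζ ^ a` the orientations sum to `n * T(f, f, f)` with
`f a = χ (1 - ζ ^ a)`. For the `2n`-th roots of unity `± ζ ^ a` they sum to
`2n * (T(f, f, f) + 3 * T(f, h, h))` with `h a = χ (1 + ζ ^ a)`, and `f (2 * a) = f a * h a`.

For `n = 13` each of these sums vanishes exactly when `f (5 * a) = -f a` for all `a`. If this holds,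
the dilation by `5` negates every term of `T(f, f, f)` and of `T(f, h, h)`. The converse is a check
of the finitely many sign patterns of the even function `f`.
-/

section PlaneDet

variable {R : Type*} [CommRing R]

/-- The determinant of a pair of vectors in the plane. -/
def planeDet (u v : Fin 2 → R) : R := (Matrix.of ![u, v]).det

lemma planeDet_eq (u v : Fin 2 → R) : planeDet u v = u 0 * v 1 - u 1 * v 0 := by
  simp [planeDet, Matrix.det_fin_two, mul_comm]

lemma planeDet_linearMap (f : (Fin 2 → R) →ₗ[R] (Fin 2 → R)) (u v : Fin 2 → R) :
    planeDet (f u) (f v) = LinearMap.det f * planeDet u v := by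
  have hrows : f ∘ ![u, v] = ![f u, f v] := by
    ext i
    fin_cases i <;> rfl
  have h := (Pi.basisFun R (Fin 2)).det_comp f ![u, v]
  rwa [hrows, Pi.basisFun_det] at h

lemma planeDet_smul_add_planeDet_smul_add_planeDet_smul (u v w : Fin 2 → R) :
    planeDet v w • u + planeDet w u • v + planeDet u v • w = 0 := by
  ext i
  fin_cases i <;> simp [planeDet_eq] <;> ring

variable {F : Type*} [Field F]

lemma planeDet_eq_zero_iff {u v : Fin 2 → F} (hu : u ≠ 0) (hv : v ≠ 0) :
    planeDet u v = 0 ↔ Projectivization.mk F u hu = Projectivization.mk F v hv := by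
  rw [← not_iff_not, ← Ne, ← Ne, ← Projectivization.independent_pair_iff_ne,
    Projectivization.independent_mk_iff_LinearIndependent, ← isUnit_iff_ne_zero, planeDet,
    ← Matrix.isUnit_iff_isUnit_det, ← Matrix.linearIndependent_rows_iff_isUnit]
  rfl

lemma exists_specialLinearGroup_smul_eq {u v u' v' : Fin 2 → F} (h₀ : planeDet u v ≠ 0)
    (h : planeDet u v = planeDet u' v') :
    ∃ g : SpecialLinearGroup (Fin 2) F, g • u = u' ∧ g • v = v' := by
  let M := (Matrix.of ![u, v])ᵀ
  let M' := (Matrix.of ![u', v'])ᵀ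
  have hM : M.det = planeDet u v := Matrix.det_transpose _
  have hM' : M'.det = planeDet u v := (Matrix.det_transpose _).trans h.symm
  have hinv : M⁻¹ * M = 1 := Matrix.nonsing_inv_mul M (hM ▸ h₀.isUnit)
  have hdet : (M' * M⁻¹).det = 1 := by
    rw [Matrix.det_mul, hM', ← hM, mul_comm, ← Matrix.det_mul, hinv, Matrix.det_one]
  have hcol (j : Fin 2) : (M' * M⁻¹) *ᵥ M.col j = M'.col j := by
    rw [← Matrix.mulVec_single_one, ← Matrix.mulVec_single_one, Matrix.mulVec_mulVec,
      Matrix.mul_assoc, hinv, Matrix.mul_one]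
  exact ⟨⟨M' * M⁻¹, hdet⟩, hcol 0, hcol 1⟩

end PlaneDet

section TripleOrientation

open Projectivization

open scoped LinearAlgebra.Projectivization

variable {R F : Type*} [CommRing R] [Field F]

/-- The product of the determinants of cyclically consecutive vectors of a triple. -/
def cyclicDet (u : Fin 3 → Fin 2 → R) : R := ∏ i, planeDet (u i) (u (i + 1))

lemma cyclicDet_smul (a : Fin 3 → R) (u : Fin 3 → Fin 2 → R) :
    cyclicDet (a • u) = (∏ i, a i) ^ 2 * cyclicDet u := by
  simp only [cyclicDet, Fin.prod_univ_three, planeDet_eq, Pi.smul_apply', Pi.smul_apply,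
    smul_eq_mul, Fin.reduceAdd]
  ring

lemma cyclicDet_linearMap (f : (Fin 2 → R) →ₗ[R] (Fin 2 → R)) (u : Fin 3 → Fin 2 → R) :
    cyclicDet (f ∘ u) = LinearMap.det f ^ 3 * cyclicDet u := by
  simp [cyclicDet, planeDet_linearMap, Finset.prod_mul_distrib]

lemma cyclicDet_add_third (u v : Fin 2 → R) :
    cyclicDet ![u, v, u + v] = planeDet u v ^ 3 := by
  simp only [cyclicDet, Fin.prod_univ_three, planeDet_eq, Fin.reduceAdd, cons_val, Pi.add_apply]
  ring

lemma exists_eq_mk (t : Fin 3 → ℙ F (Fin 2 → F)) :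
    ∃ (u : Fin 3 → Fin 2 → F) (hu : ∀ i, u i ≠ 0), t = fun i => mk F (u i) (hu i) :=
  ⟨fun i => (t i).rep, fun i => (t i).rep_nonzero, funext fun i => (mk_rep (t i)).symm⟩

-- The Plücker relation makes the third of three vectors proportional to `-(U + V)`, where
-- `U` and `V` are suitable multiples of the first two.
lemma exists_eq_mk_add {t : Fin 3 → ℙ F (Fin 2 → F)} (ht : Function.Injective t) :
    ∃ (u v : Fin 2 → F) (h : ∀ i, ![u, v, u + v] i ≠ 0),
      (t = fun i => mk F (![u, v, u + v] i) (h i)) ∧ planeDet u v ≠ 0 := by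
  obtain ⟨u, hu, rfl⟩ := exists_eq_mk t
  have hdet {i j : Fin 3} (hij : i ≠ j) : planeDet (u i) (u j) ≠ 0 := fun h =>
    hij (ht ((planeDet_eq_zero_iff (hu i) (hu j)).mp h))
  have hrel := planeDet_smul_add_planeDet_smul_add_planeDet_smul (u 0) (u 1) (u 2)
  let a : Fin 3 → F :=
    ![planeDet (u 1) (u 2), planeDet (u 2) (u 0), -planeDet (u 0) (u 1)]
  have ha (i : Fin 3) : a i ≠ 0 := by
    fin_cases i
    exacts [hdet (by decide), hdet (by decide), neg_ne_zero.mpr (hdet (by decide))]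
  have hsum : ![a 0 • u 0, a 1 • u 1, a 0 • u 0 + a 1 • u 1] = a • u := by
    ext1 i
    fin_cases i
    exacts [rfl, rfl, (eq_neg_of_add_eq_zero_left hrel).trans (neg_smul _ _).symm]
  have hne (i : Fin 3) : ![a 0 • u 0, a 1 • u 1, a 0 • u 0 + a 1 • u 1] i ≠ 0 := by
    rw [hsum]
    exact smul_ne_zero (ha i) (hu i)
  refine ⟨a 0 • u 0, a 1 • u 1, hne, funext fun i => ?_, ?_⟩
  · refine ((mk_eq_mk_iff' F _ _ _ _).mpr ⟨a i, ?_⟩).symm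
    exact (congrFun hsum i).symm
  · have hscale : planeDet (a 0 • u 0) (a 1 • u 1) = a 0 * a 1 * planeDet (u 0) (u 1) := by
      simp only [planeDet_eq, Pi.smul_apply, smul_eq_mul]
      ring
    rw [hscale]
    exact mul_ne_zero (mul_ne_zero (ha 0) (ha 1)) (hdet (by decide))

variable [Fintype F] [DecidableEq F]

/-- The orientation of a triple of points of the projective line: the quadratic character of the
cyclic product of determinants of representatives, `0` when two of the points coincide. Rescaling
the representatives multiplies the product by a square. -/
def tripleOrientation (t : Fin 3 → ℙ F (Fin 2 → F)) : ℤ :=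
  quadraticChar F (cyclicDet fun i => (t i).rep)

lemma tripleOrientation_mk (u : Fin 3 → Fin 2 → F) (hu : ∀ i, u i ≠ 0) :
    tripleOrientation (fun i => mk F (u i) (hu i)) = quadraticChar F (cyclicDet u) := by
  choose a ha using fun i => exists_smul_eq_mk_rep F (u i) (hu i)
  have hrep : (fun i => (mk F (u i) (hu i)).rep) = (fun i => (a i : F)) • u := by
    ext1 i
    exact (ha i).symm
  have hprod : ∏ i, (a i : F) ≠ 0 := Finset.prod_ne_zero_iff.mpr fun i _ => (a i).ne_zero
  rw [tripleOrientation, hrep, cyclicDet_smul, map_mul, quadraticChar_sq_one' hprod, one_mul]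

lemma tripleOrientation_map (f : (Fin 2 → F) →ₗ[F] (Fin 2 → F)) (hf : Function.Injective f)
    (t : Fin 3 → ℙ F (Fin 2 → F)) :
    tripleOrientation (fun i => (t i).map f hf) =
      quadraticChar F (LinearMap.det f) ^ 3 * tripleOrientation t := by
  obtain ⟨u, hu, rfl⟩ := exists_eq_mk t
  simp only [map_mk]
  rw [tripleOrientation_mk, tripleOrientation_mk, ← map_pow, ← map_mul, ← cyclicDet_linearMap]
  rfl

lemma tripleOrientation_smul (g : SpecialLinearGroup (Fin 2) F) (t : Fin 3 → ℙ F (Fin 2 → F)) :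
    tripleOrientation (g • t) = tripleOrientation t := by
  have hdet : LinearMap.det (SpecialLinearGroup.toLin' g : (Fin 2 → F) →ₗ[F] (Fin 2 → F)) = 1 := by
    rw [SpecialLinearGroup.toLin'_to_linearMap, LinearMap.det_toLin', g.det_coe]
  have h := tripleOrientation_map _ (SpecialLinearGroup.toLin' g).injective t
  rwa [hdet, map_one, one_pow, one_mul] at h

lemma tripleOrientation_ne_zero_iff (t : Fin 3 → ℙ F (Fin 2 → F)) :
    tripleOrientation t ≠ 0 ↔ Function.Injective t := by
  have hinj : Function.Injective t ↔ ∀ i, t i ≠ t (i + 1) := by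
    refine ⟨fun h i hi => by simpa using h hi, fun h i j hij => ?_⟩
    have := h 0
    have := h 1
    have := h 2
    fin_cases i <;> fin_cases j <;> simp_all
  rw [hinj]
  obtain ⟨u, hu, rfl⟩ := exists_eq_mk t
  rw [tripleOrientation_mk, Ne, quadraticChar_eq_zero_iff, cyclicDet, Finset.prod_eq_zero_iff]
  simp [planeDet_eq_zero_iff (hu _) (hu _)]

lemma tripleOrientation_eq_one_or_neg_one {t : Fin 3 → ℙ F (Fin 2 → F)}
    (ht : Function.Injective t) : tripleOrientation t = 1 ∨ tripleOrientation t = -1 :=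
  quadraticChar_dichotomy fun h =>
    (tripleOrientation_ne_zero_iff t).mpr ht (quadraticChar_eq_zero_iff.mpr h)

-- After normalising each triple to `[u], [v], [u + v]`, equality of orientations says that
-- `planeDet u v` and `planeDet u' v'` differ by a square, which rescaling `u'` and `v'` absorbs.
lemma exists_smul_eq_of_tripleOrientation_eq {s t : Fin 3 → ℙ F (Fin 2 → F)}
    (hs : Function.Injective s) (ht : Function.Injective t)
    (hst : tripleOrientation s = tripleOrientation t) :
    ∃ g : SpecialLinearGroup (Fin 2) F, g • s = t := by
  obtain ⟨u, v, h, rfl, hdet⟩ := exists_eq_mk_add hs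
  obtain ⟨u', v', h', rfl, hdet'⟩ := exists_eq_mk_add ht
  have hcube {x : F} (hx : x ≠ 0) : quadraticChar F (x ^ 3) = quadraticChar F x := by
    rw [pow_succ', map_mul, quadraticChar_sq_one' hx, mul_one]
  rw [tripleOrientation_mk, tripleOrientation_mk, cyclicDet_add_third, cyclicDet_add_third,
    hcube hdet, hcube hdet'] at hst
  obtain ⟨m, hm⟩ : IsSquare (planeDet u v / planeDet u' v') := by
    rw [← quadraticChar_one_iff_isSquare (div_ne_zero hdet hdet'),
      ← mul_eq_right₀ (mt quadraticChar_eq_zero_iff.mp hdet'), ← map_mul,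
      div_mul_cancel₀ _ hdet', hst]
  have hm0 : m ≠ 0 := by
    rintro rfl
    rw [mul_zero] at hm
    exact div_ne_zero hdet hdet' hm
  have hscale : planeDet u v = planeDet (m • u') (m • v') := by
    rw [div_eq_iff hdet'] at hm
    rw [hm]
    simp only [planeDet_eq, Pi.smul_apply, smul_eq_mul]
    ring
  obtain ⟨g, hu, hv⟩ := exists_specialLinearGroup_smul_eq hdet hscale
  refine ⟨g, funext fun i => ?_⟩
  rw [Pi.smul_apply, smul_mk, mk_eq_mk_iff']
  refine ⟨m, ?_⟩
  fin_cases i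
  exacts [hu.symm, hv.symm, by simp [hu, hv]]

lemma exists_perm_tripleOrientation_eq_neg (hF : ringChar F ≠ 2) :
    ∃ e : Equiv.Perm (Fin 3 → ℙ F (Fin 2 → F)),
      ∀ t, tripleOrientation (e t) = -tripleOrientation t := by
  obtain ⟨d, hd⟩ := quadraticChar_exists_neg_one hF
  have hd0 : d ≠ 0 := by
    rintro rfl
    simp at hd
  let f := Matrix.toLin' (Matrix.diagonal ![d, 1])
  have hdet : LinearMap.det f = d := by simp [f]
  have hf : Function.Injective f :=
    (LinearMap.equivOfDetNeZero f (hdet ▸ hd0)).injective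
  have hmap : Function.Injective fun (t : Fin 3 → ℙ F (Fin 2 → F)) i => (t i).map f hf :=
    fun s t hst => funext fun i => map_injective f hf (congrFun hst i)
  refine ⟨Equiv.ofBijective _ (Finite.injective_iff_bijective.mp hmap), fun t => ?_⟩
  refine (tripleOrientation_map f hf t).trans ?_
  rw [hdet, hd]
  ring

end TripleOrientation

section OrbitCounting

open scoped Pointwise

variable {G X ι : Type*} [Group G] [MulAction G X]

/-- The number of translates of `B` containing the tuple `t`. -/
def orbitCount (G : Type*) [Group G] [MulAction G X] (B : Set X) (t : ι → X) : ℕ :=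
  {S ∈ MulAction.orbit G B | Set.range t ⊆ S}.ncard

lemma orbitCount_smul (B : Set X) (g : G) (t : ι → X) :
    orbitCount G B (g • t) = orbitCount G B t := by
  have hset : {S ∈ MulAction.orbit G B | Set.range (g • t) ⊆ S} =
      (g • ·) '' {S ∈ MulAction.orbit G B | Set.range t ⊆ S} := by
    rw [Set.image_smul]
    ext S
    have horbit : g⁻¹ • S ∈ MulAction.orbit G B ↔ S ∈ MulAction.orbit G B := by
      rw [← MulAction.orbit_eq_iff, MulAction.orbit_smul, MulAction.orbit_eq_iff]
    simp [Set.mem_smul_set_iff_inv_smul_mem, Set.range_subset_iff, horbit]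
  rw [orbitCount, hset, Set.ncard_image_of_injective _ (MulAction.injective g), orbitCount]

lemma orbitCount_pos [Finite X] {B : Set X} {t : ι → X} (ht : Set.range t ⊆ B) :
    0 < orbitCount G B t :=
  (Set.ncard_pos (Set.toFinite _)).mpr ⟨B, MulAction.mem_orbit_self B, ht⟩

open Classical in
lemma sum_mul_orbitCount [Fintype X] [Fintype ι] [DecidableEq ι] {R : Type*} [CommSemiring R]
    (B : Set X) (w : (ι → X) → R) (hw : ∀ (g : G) t, w (g • t) = w t) :
    ∑ t, w t * orbitCount G B t =
      (MulAction.orbit G B).ncard * ∑ t with Set.range t ⊆ B, w t := by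
  have hcount (t : ι → X) :
      (orbitCount G B t : R) =
        ∑ S ∈ (MulAction.orbit G B).toFinset, if Set.range t ⊆ S then 1 else 0 := by
    rw [Finset.sum_boole, orbitCount, Set.ncard_eq_toFinset_card']
    congr 2
    ext S
    simp
  have htranslate {S : Set X} (hS : S ∈ MulAction.orbit G B) :
      ∑ t with Set.range t ⊆ S, w t = ∑ t with Set.range t ⊆ B, w t := by
    obtain ⟨g, rfl⟩ := hS
    symm
    refine Finset.sum_equiv (MulAction.toPerm g) (fun t => ?_) fun t _ => (hw g t).symm
    simp [Set.range_subset_iff]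
  calc ∑ t, w t * orbitCount G B t
      = ∑ S ∈ (MulAction.orbit G B).toFinset, ∑ t with Set.range t ⊆ S, w t := by
        simp only [hcount, Finset.mul_sum, mul_ite, mul_one, mul_zero, Finset.sum_filter]
        exact Finset.sum_comm
    _ = (MulAction.orbit G B).ncard * ∑ t with Set.range t ⊆ B, w t := by
        rw [Finset.sum_congr rfl fun S hS => htranslate (Set.mem_toFinset.mp hS),
          Finset.sum_const, nsmul_eq_mul, Set.ncard_eq_toFinset_card']

end OrbitCounting

section SignedSums

variable {T : Type*} {ω N : T → ℤ} {e : Equiv.Perm T}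

lemma sum_eq_zero_of_neg_perm [Fintype T] (he : ∀ t, ω (e t) = -ω t) : ∑ t, ω t = 0 := by
  have h := Equiv.sum_comp e ω
  simp only [he, Finset.sum_neg_distrib] at h
  omega

lemma eq_or_eq_of_neg_perm (hω : ∀ t, ω t ≠ 0 → ω t = 1 ∨ ω t = -1)
    (he : ∀ t, ω (e t) = -ω t) (hN : ∀ s t, ω s ≠ 0 → ω s = ω t → N s = N t)
    {s t : T} (hs : ω s ≠ 0) (ht : ω t ≠ 0) :
    ω t = ω s ∧ N t = N s ∨ ω t = -ω s ∧ N t = N (e s) := by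
  have hsign : ω t = ω s ∨ ω t = -ω s := by grind
  exact hsign.imp (fun h => ⟨h, hN t s ht h⟩) fun h => ⟨h, hN t (e s) ht (h.trans (he s).symm)⟩

lemma two_mul_sum_mul_of_neg_perm [Fintype T] (hω : ∀ t, ω t ≠ 0 → ω t = 1 ∨ ω t = -1)
    (he : ∀ t, ω (e t) = -ω t) (hN : ∀ s t, ω s ≠ 0 → ω s = ω t → N s = N t)
    {s : T} (hs : ω s ≠ 0) :
    2 * ∑ t, ω t * N t = (∑ t, ω t ^ 2) * (ω s * (N s - N (e s))) := by
  have hterm (t : T) : 2 * (ω t * N t) =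
      ω t * (N s + N (e s)) + ω t ^ 2 * (ω s * (N s - N (e s))) := by
    by_cases ht : ω t = 0
    · simp [ht]
    have hs1 : ω s ^ 2 = 1 := sq_eq_one_iff.mpr (hω s hs)
    rcases eq_or_eq_of_neg_perm hω he hN hs ht with ⟨h, h'⟩ | ⟨h, h'⟩ <;> rw [h, h'] <;> grind
  rw [Finset.mul_sum, Finset.sum_congr rfl fun t _ => hterm t, Finset.sum_add_distrib,
    ← Finset.sum_mul, ← Finset.sum_mul, sum_eq_zero_of_neg_perm he, zero_mul, zero_add]

lemma sum_mul_eq_zero_iff_of_neg_perm [Fintype T]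
    (hω : ∀ t, ω t ≠ 0 → ω t = 1 ∨ ω t = -1)
    (he : ∀ t, ω (e t) = -ω t) (hN : ∀ s t, ω s ≠ 0 → ω s = ω t → N s = N t) :
    ∑ t, ω t * N t = 0 ↔ ∀ s t, ω s ≠ 0 → ω t ≠ 0 → N s = N t := by
  constructor
  · intro hzero s t hs ht
    have hsq : ∑ r, ω r ^ 2 ≠ 0 :=
      (Finset.sum_pos' (fun r _ => sq_nonneg _) ⟨s, Finset.mem_univ s, by positivity⟩).ne'
    have hflip : N s = N (e s) := by
      have h := two_mul_sum_mul_of_neg_perm hω he hN hs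
      simpa [hzero, hsq, hs, sub_eq_zero] using h.symm
    rcases eq_or_eq_of_neg_perm hω he hN hs ht with ⟨-, h⟩ | ⟨-, h⟩
    exacts [h.symm, hflip.trans h.symm]
  · intro hconst
    by_cases hne : ∃ s, ω s ≠ 0
    · obtain ⟨s, hs⟩ := hne
      have h := two_mul_sum_mul_of_neg_perm hω he hN hs
      rw [hconst s (e s) hs (by rwa [he, neg_ne_zero]), sub_self, mul_zero, mul_zero] at h
      omega
    · push Not at hne
      simp [hne]

end SignedSums

section DesignCriterion

open scoped LinearAlgebra.Projectivization Pointwise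

variable {F : Type} [Field F]

lemma designBlocks_eq_orbit (k : ℕ) :
    designBlocks F k = MulAction.orbit (SpecialLinearGroup (Fin 2) F) (starterB F k) := by
  ext S
  exact exists_congr fun g => eq_comm

lemma gives3Design_iff_orbitCount (k : ℕ) :
    gives3Design F k ↔ ∃ lam > 0, ∀ t : Fin 3 → ℙ F (Fin 2 → F), Function.Injective t →
      orbitCount (SpecialLinearGroup (Fin 2) F) (starterB F k) t = lam := by
  refine exists_congr fun lam => and_congr_right fun _ => ⟨fun h t ht => ?_, fun h T hT => ?_⟩
  · have := h (Finset.univ.map ⟨t, ht⟩) (by simp)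
    rwa [designBlocks_eq_orbit, Finset.coe_map, Finset.coe_univ, Set.image_univ] at this
  · let e := T.equivFinOfCardEq hT
    have := h (fun i => e.symm i) (Subtype.val_injective.comp e.symm.injective)
    have hrange : Set.range (fun i => (e.symm i : ℙ F (Fin 2 → F))) = T := by
      rw [← Function.comp_def Subtype.val, e.symm.surjective.range_comp, Subtype.range_coe]
    rwa [designBlocks_eq_orbit, ← hrange]

instance [Finite F] : Fintype (ℙ F (Fin 2 → F)) := Fintype.ofFinite _

variable [Fintype F] [DecidableEq F]

open Classical in
/-- The sum of the orientations of all ordered triples of points of `B`. -/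
def orientationSum (B : Set (ℙ F (Fin 2 → F))) : ℤ :=
  ∑ t : Fin 3 → ℙ F (Fin 2 → F) with Set.range t ⊆ B, tripleOrientation t

lemma orbitCount_const_iff_orientationSum_eq_zero (hF : ringChar F ≠ 2)
    (B : Set (ℙ F (Fin 2 → F))) :
    (∀ s t : Fin 3 → ℙ F (Fin 2 → F), Function.Injective s → Function.Injective t →
      orbitCount (SpecialLinearGroup (Fin 2) F) B s =
        orbitCount (SpecialLinearGroup (Fin 2) F) B t) ↔
    orientationSum B = 0 := by
  obtain ⟨e, he⟩ := exists_perm_tripleOrientation_eq_neg hF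
  have hcriterion := sum_mul_eq_zero_iff_of_neg_perm
    (N := fun t => (orbitCount (SpecialLinearGroup (Fin 2) F) B t : ℤ))
    (fun t ht => tripleOrientation_eq_one_or_neg_one ((tripleOrientation_ne_zero_iff t).mp ht)) he
    (fun s t hs hst => by
      obtain ⟨g, rfl⟩ := exists_smul_eq_of_tripleOrientation_eq
        ((tripleOrientation_ne_zero_iff s).mp hs) ((tripleOrientation_ne_zero_iff t).mp (hst ▸ hs))
        hst
      rw [orbitCount_smul])
  have horbit : (MulAction.orbit (SpecialLinearGroup (Fin 2) F) B).ncard ≠ 0 :=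
    ((Set.ncard_pos (Set.toFinite _)).mpr (MulAction.nonempty_orbit B)).ne'
  rw [sum_mul_orbitCount B _ tripleOrientation_smul, mul_eq_zero, Nat.cast_eq_zero,
    or_iff_right horbit] at hcriterion
  simp only [tripleOrientation_ne_zero_iff, Nat.cast_inj] at hcriterion
  exact hcriterion.symm

theorem gives3Design_iff_orientationSum_eq_zero (hF : ringChar F ≠ 2) {k : ℕ}
    {t₀ : Fin 3 → ℙ F (Fin 2 → F)} (ht₀ : Function.Injective t₀)
    (hmem : Set.range t₀ ⊆ starterB F k) :
    gives3Design F k ↔ orientationSum (starterB F k) = 0 := by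
  rw [gives3Design_iff_orbitCount, ← orbitCount_const_iff_orientationSum_eq_zero hF]
  constructor
  · rintro ⟨lam, -, h⟩ s t hs ht
    rw [h s hs, h t ht]
  · exact fun h => ⟨_, orbitCount_pos hmem, fun t ht => h t t₀ ht ht₀⟩

end DesignCriterion

section TripleSum

variable {A R : Type*} [AddCommGroup A] [Fintype A] [CommSemiring R]

/-- The sum of `f a * g b * h c` over all triples with `a + b + c = 0`. -/
def tripleSum (f g h : A → R) : R := ∑ a, ∑ b, f a * g b * h (-(a + b))

lemma tripleSum_swap (f g h : A → R) : tripleSum g f h = tripleSum f g h := by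
  rw [tripleSum, Finset.sum_comm]
  exact Finset.sum_congr rfl fun a _ => Finset.sum_congr rfl fun b _ => by
    rw [mul_comm (g b), add_comm b]

lemma tripleSum_rotate (f g h : A → R) : tripleSum g h f = tripleSum f g h := by
  calc tripleSum g h f
      = ∑ b, ∑ a, g b * h (-(b + a)) * f a := by
        refine Finset.sum_congr rfl fun b _ => ?_
        rw [← ((Equiv.addLeft b).trans (Equiv.neg A)).sum_comp]
        simp
    _ = tripleSum f g h := by
        rw [Finset.sum_comm]
        exact Finset.sum_congr rfl fun a _ => Finset.sum_congr rfl fun b _ => by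
          rw [add_comm b, mul_right_comm, mul_comm (g b)]

lemma tripleSum_eq_zero_of_neg_addEquiv {f g h : A → ℤ} (e : A ≃+ A)
    (he : ∀ a b c, f (e a) * g (e b) * h (e c) = -(f a * g b * h c)) : tripleSum f g h = 0 := by
  rw [tripleSum, ← Fintype.sum_prod_type']
  refine sum_eq_zero_of_neg_perm (e := e.toEquiv.prodCongr e.toEquiv) fun p => ?_
  simpa using he p.1 p.2 (-(p.1 + p.2))

lemma sum_prod_cyclic_sub (f : A → R) :
    ∑ t : Fin 3 → A, ∏ i, f (t (i + 1) - t i) = Fintype.card A * tripleSum f f f := by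
  let gaps : (Fin 3 → A) ≃ A × A × A :=
    { toFun := fun t => (t 0, t 1 - t 0, t 2 - t 1)
      invFun := fun p => ![p.1, p.1 + p.2.1, p.1 + p.2.1 + p.2.2]
      left_inv := fun t => by
        ext i
        fin_cases i <;> simp
      right_inv := fun p => by simp }
  have hgaps (t : Fin 3 → A) : ∏ i, f (t (i + 1) - t i) =
      f (gaps t).2.1 * f (gaps t).2.2 * f (-((gaps t).2.1 + (gaps t).2.2)) := by
    simp [gaps, Fin.prod_univ_three]
  rw [Finset.sum_congr rfl fun t _ => hgaps t,
    gaps.sum_comp fun p => f p.2.1 * f p.2.2 * f (-(p.2.1 + p.2.2))]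
  simp [Fintype.sum_prod_type, tripleSum]

lemma tripleSum_zmod_two_prod (f : ZMod 2 × A → R) :
    tripleSum f f f = tripleSum (f ⟨0, ·⟩) (f ⟨0, ·⟩) (f ⟨0, ·⟩) +
      3 * tripleSum (f ⟨0, ·⟩) (f ⟨1, ·⟩) (f ⟨1, ·⟩) := by
  have hsplit : tripleSum f f f =
      tripleSum (f ⟨0, ·⟩) (f ⟨0, ·⟩) (f ⟨0, ·⟩) + tripleSum (f ⟨0, ·⟩) (f ⟨1, ·⟩) (f ⟨1, ·⟩) +
      (tripleSum (f ⟨1, ·⟩) (f ⟨0, ·⟩) (f ⟨1, ·⟩) +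
        tripleSum (f ⟨1, ·⟩) (f ⟨1, ·⟩) (f ⟨0, ·⟩)) := by
    have hsum (u : ZMod 2 → R) : ∑ x, u x = u 0 + u 1 := Fin.sum_univ_two u
    simp only [tripleSum, Fintype.sum_prod_type, hsum, Finset.sum_add_distrib, Prod.mk_add_mk,
      Prod.neg_mk]
    simp only [add_zero, zero_add, neg_zero, (by decide : -(1 : ZMod 2) = 1),
      (by decide : -(1 + 1 : ZMod 2) = 0)]
    ring
  rw [hsplit, tripleSum_swap (f ⟨0, ·⟩) (f ⟨1, ·⟩) (f ⟨1, ·⟩),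
    tripleSum_rotate (f ⟨0, ·⟩) (f ⟨1, ·⟩) (f ⟨1, ·⟩)]
  ring

end TripleSum

section MultiplicativeSubgroups

variable {F : Type} [Field F]

lemma embedPt_injective : Function.Injective (embedPt F) := by
  intro x y hxy
  have h := (planeDet_eq_zero_iff _ _).mpr hxy
  simpa [planeDet_eq, sub_eq_zero] using h

variable {A : Type*} [AddCommGroup A]

lemma starterB_card_eq_range [Fintype A] {ψ : AddChar A F} (hψ : Function.Injective ψ) :
    starterB F (Fintype.card A) = Set.range (embedPt F ∘ ψ) := by
  classical
  have hroots : Finset.univ.image ψ = Polynomial.nthRootsFinset (Fintype.card A) (1 : F) := by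
    refine Finset.eq_of_subset_of_card_le (fun x hx => ?_) ?_
    · obtain ⟨a, -, rfl⟩ := Finset.mem_image.mp hx
      rw [Polynomial.mem_nthRootsFinset Fintype.card_pos, ← AddChar.map_nsmul_eq_pow,
        card_nsmul_eq_zero, AddChar.map_zero_eq_one]
    · rw [Finset.card_image_of_injective _ hψ, Finset.card_univ]
      exact (Multiset.toFinset_card_le _).trans (Polynomial.card_nthRoots _ _)
  have hset : {x : F | x ^ Fintype.card A = 1} = Set.range ψ := by
    ext x
    rw [Set.mem_ofPred_eq, ← Polynomial.mem_nthRootsFinset Fintype.card_pos, ← hroots]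
    simp
  rw [starterB, Set.range_comp, hset]

variable [Fintype F] [DecidableEq F]

lemma orientationSum_range {ι : Type*} [Fintype ι]
    {p : ι → Projectivization F (Fin 2 → F)} (hp : Function.Injective p) :
    orientationSum (Set.range p) = ∑ t : Fin 3 → ι, tripleOrientation (p ∘ t) := by
  classical
  symm
  refine Finset.sum_nbij (p ∘ ·) (fun t _ => ?_) (hp.comp_left.injOn) (fun t ht => ?_)
    fun _ _ => rfl
  · simpa using Set.range_comp_subset_range t p
  · obtain ⟨s, hs⟩ := Set.range_subset_range_iff_exists_comp.mp (Finset.mem_filter.mp ht).2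
    exact ⟨s, by simp, hs.symm⟩

lemma tripleOrientation_embedPt (x : Fin 3 → F) :
    tripleOrientation (embedPt F ∘ x) = ∏ i, quadraticChar F (x i - x (i + 1)) := by
  refine (tripleOrientation_mk (fun i => ![x i, 1]) _).trans ?_
  simp [cyclicDet, planeDet_eq]

/-- The quadratic character of the difference `1 - ψ a`. -/
def gapSign (ψ : AddChar A F) (a : A) : ℤ := quadraticChar F (1 - ψ a)

lemma quadraticChar_sub_eq_gapSign {ψ : AddChar A F} (hsq : ∀ a, IsSquare (ψ a)) (a b : A) :
    quadraticChar F (ψ a - ψ b) = gapSign ψ (b - a) := by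
  have hfactor : ψ a - ψ b = ψ a * (1 - ψ (b - a)) := by
    rw [mul_sub, mul_one, ← AddChar.map_add_eq_mul, add_sub_cancel]
  have hone : quadraticChar F (ψ a) = 1 :=
    (quadraticChar_one_iff_isSquare (ψ.val_isUnit a).ne_zero).mpr (hsq a)
  rw [hfactor, map_mul, hone, one_mul, gapSign]

theorem gives3Design_card_iff_tripleSum_eq_zero [Fintype A] (hF : ringChar F ≠ 2)
    (hA : 3 ≤ Fintype.card A) {ψ : AddChar A F} (hψ : Function.Injective ψ)
    (hsq : ∀ a, IsSquare (ψ a)) :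
    gives3Design F (Fintype.card A) ↔ tripleSum (gapSign ψ) (gapSign ψ) (gapSign ψ) = 0 := by
  have hinj : Function.Injective (embedPt F ∘ ψ) := embedPt_injective.comp hψ
  have hrange := starterB_card_eq_range hψ
  obtain ⟨t₀⟩ : Nonempty (Fin 3 ↪ A) :=
    Function.Embedding.nonempty_of_card_le (by rwa [Fintype.card_fin])
  rw [gives3Design_iff_orientationSum_eq_zero hF (hinj.comp t₀.injective)
    (hrange ▸ Set.range_comp_subset_range t₀ _), hrange, orientationSum_range hinj]
  simp only [Function.comp_assoc, tripleOrientation_embedPt, Function.comp_apply,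
    quadraticChar_sub_eq_gapSign hsq]
  rw [sum_prod_cyclic_sub, mul_eq_zero, or_iff_right]
  exact_mod_cast (by omega : Fintype.card A ≠ 0)

end MultiplicativeSubgroups

section Doubling

variable {F A : Type*} [Field F] [AddCommGroup A]

/-- The character `(ε, a) ↦ (-1) ^ ε * ψ a`, whose range is generated by `-1` and the range
of `ψ`. -/
def signedChar (ψ : AddChar A F) : AddChar (ZMod 2 × A) F :=
  (AddChar.zmodChar 2 (neg_one_sq (R := F))).compAddMonoidHom (AddMonoidHom.fst _ _) *
    ψ.compAddMonoidHom (AddMonoidHom.snd _ _)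

lemma signedChar_zero (ψ : AddChar A F) (a : A) : signedChar ψ (0, a) = ψ a := by
  simp [signedChar]

lemma signedChar_one (ψ : AddChar A F) (a : A) : signedChar ψ (1, a) = -ψ a := by
  simp [signedChar, AddChar.zmodChar_apply, ZMod.val_one]

lemma signedChar_injective [Fintype A] (hF : ringChar F ≠ 2) (hA : Odd (Fintype.card A))
    {ψ : AddChar A F} (hψ : Function.Injective ψ) : Function.Injective (signedChar ψ) := by
  rw [AddChar.injective_iff]
  rintro ⟨ε, a⟩ h
  fin_cases ε
  · have ha : ψ a = 1 := (signedChar_zero ψ a).symm.trans h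
    exact Prod.ext rfl (AddChar.injective_iff.mp hψ ha)
  · have ha : ψ a = -1 := neg_eq_iff_eq_neg.mp ((signedChar_one ψ a).symm.trans h)
    have hpow : (-1 : F) = 1 := by
      rw [← hA.neg_one_pow, ← ha, ← AddChar.map_nsmul_eq_pow, card_nsmul_eq_zero,
        AddChar.map_zero_eq_one]
    exact absurd hpow (Ring.neg_one_ne_one_of_char_ne_two hF)

lemma isSquare_addChar_apply [Fintype A] (hA : Odd (Fintype.card A)) (ψ : AddChar A F) (a : A) :
    IsSquare (ψ a) := by
  obtain ⟨m, hm⟩ := hA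
  have hpow : ψ a ^ (2 * m + 1) = 1 := by
    rw [← hm, ← AddChar.map_nsmul_eq_pow, card_nsmul_eq_zero, AddChar.map_zero_eq_one]
  refine ⟨ψ a ^ (m + 1), ?_⟩
  rw [← pow_add, show m + 1 + (m + 1) = 2 * m + 1 + 1 by ring, pow_succ, hpow, one_mul]

lemma isSquare_signedChar (hneg : IsSquare (-1 : F)) {ψ : AddChar A F} (hsq : ∀ a, IsSquare (ψ a))
    (p : ZMod 2 × A) : IsSquare (signedChar ψ p) := by
  obtain ⟨ε, a⟩ := p
  fin_cases ε
  · exact (signedChar_zero ψ a).symm ▸ hsq a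
  · refine (signedChar_one ψ a).symm ▸ ?_
    rw [← neg_one_mul]
    exact hneg.mul (hsq a)

end Doubling

section GapSign

variable {F : Type} {A : Type*} [Field F] [Fintype F] [DecidableEq F] [AddCommGroup A]

lemma gapSign_zero (ψ : AddChar A F) : gapSign ψ 0 = 0 := by
  simp [gapSign]

lemma isUnit_gapSign {ψ : AddChar A F} (hψ : Function.Injective ψ) {a : A} (ha : a ≠ 0) :
    IsUnit (gapSign ψ a) := by
  refine Int.isUnit_iff.mpr (quadraticChar_dichotomy fun h => ha ?_)
  exact AddChar.injective_iff.mp hψ (sub_eq_zero.mp h).symm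

lemma gapSign_even (hneg : IsSquare (-1 : F)) {ψ : AddChar A F} (hsq : ∀ a, IsSquare (ψ a)) :
    (gapSign ψ).Even := by
  intro a
  have hneg_one : quadraticChar F (-1) = 1 :=
    (quadraticChar_one_iff_isSquare (neg_ne_zero.mpr one_ne_zero)).mpr hneg
  rw [← zero_sub, ← quadraticChar_sub_eq_gapSign hsq, AddChar.map_zero_eq_one, gapSign,
    ← neg_sub 1, ← neg_one_mul, map_mul, hneg_one, one_mul]

lemma gapSign_signedChar_zero (ψ : AddChar A F) (a : A) :
    gapSign (signedChar ψ) (0, a) = gapSign ψ a := by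
  rw [gapSign, signedChar_zero, gapSign]

lemma gapSign_two_nsmul (ψ : AddChar A F) (a : A) :
    gapSign ψ (2 • a) = gapSign ψ a * gapSign (signedChar ψ) (1, a) := by
  rw [gapSign, gapSign, gapSign, signedChar_one, ← map_mul, AddChar.map_nsmul_eq_pow]
  ring_nf

theorem gives3Design_two_mul_card_iff [Fintype A] (hF : ringChar F ≠ 2)
    (hneg : IsSquare (-1 : F)) (hA : 3 ≤ Fintype.card A) (hodd : Odd (Fintype.card A))
    {ψ : AddChar A F} (hψ : Function.Injective ψ) :
    gives3Design F (2 * Fintype.card A) ↔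
      tripleSum (gapSign ψ) (gapSign ψ) (gapSign ψ) +
        3 * tripleSum (gapSign ψ) (gapSign (signedChar ψ) ⟨1, ·⟩)
          (gapSign (signedChar ψ) ⟨1, ·⟩) = 0 := by
  have hcard : Fintype.card (ZMod 2 × A) = 2 * Fintype.card A := by
    rw [Fintype.card_prod, ZMod.card]
  rw [← hcard, gives3Design_card_iff_tripleSum_eq_zero hF (by omega)
    (signedChar_injective hF hodd hψ)
    (isSquare_signedChar hneg (isSquare_addChar_apply hodd ψ)), tripleSum_zmod_two_prod]
  simp only [gapSign_signedChar_zero]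

end GapSign

lemma exists_injective_addChar_zmod {F : Type*} [Field F] [Fintype F] {n : ℕ}
    (hn : n ∣ Fintype.card F - 1) : ∃ ψ : AddChar (ZMod n) F, Function.Injective ψ := by
  obtain ⟨m, hm⟩ := hn
  have hpos : 0 < Fintype.card F - 1 := Nat.sub_pos_of_lt Fintype.one_lt_card
  have : NeZero n := ⟨left_ne_zero_of_mul (hm ▸ hpos.ne')⟩
  obtain ⟨ζ, hζ⟩ : ∃ ζ : Fˣ, orderOf ζ = Fintype.card F - 1 := by
    rw [← Nat.card_eq_fintype_card, ← Nat.card_units]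
    exact IsCyclic.exists_ofOrder_eq_natCard
  have hroot : IsPrimitiveRoot (ζ : F) (Fintype.card F - 1) :=
    IsPrimitiveRoot.coe_units_iff.mpr (hζ ▸ IsPrimitiveRoot.orderOf ζ)
  have hψ := AddChar.zmodChar_primitive_of_primitive_root n
    (hroot.pow hpos (hm.trans (mul_comm n m)))
  exact ⟨_, AddChar.injective_iff.mpr fun {a} => (hψ.zmod_char_eq_one_iff n a).mp⟩

section Thirteen

/-- The even function on `ZMod 13` with values `x, a, b, c, d, e, g` at `0, 1, 2, 3, 4, 5, 6`. -/
def evenFun {R : Type*} (x a b c d e g : R) : ZMod 13 → R :=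
  ![x, a, b, c, d, e, g, g, e, d, c, b, a]

lemma eq_evenFun {R : Type*} {f : ZMod 13 → R} (hf : f.Even) :
    f = evenFun (f 0) (f 1) (f 2) (f 3) (f 4) (f 5) (f 6) := by
  funext i
  fin_cases i
  exacts [rfl, rfl, rfl, rfl, rfl, rfl, rfl, hf 6, hf 5, hf 4, hf 3, hf 2, hf 1]

lemma tripleSum_evenFun {R : Type*} [CommSemiring R] (a b c d e g x p q r s t u : R) :
    tripleSum (evenFun 0 a b c d e g) (evenFun x p q r s t u) (evenFun x p q r s t u) =
      4 * x * (a * p + b * q + c * r + d * s + e * t + g * u) +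
      2 * (b * p ^ 2 + d * q ^ 2 + g * r ^ 2 + e * s ^ 2 + c * t ^ 2 + a * u ^ 2) +
      4 * (a * p * q + b * q * s + c * r * u + d * s * t + e * t * r + g * u * p) +
      4 * (a * (q * r + r * s + s * t + t * u) + b * (p * r + r * t + s * u + t * u) +
        c * (p * q + p * s + q * t + s * u) + d * (p * r + p * t + q * u + r * u) +
        e * (p * s + p * u + q * r + q * u) + g * (p * t + q * s + q * t + r * s)) := by
  change tripleSum (A := Fin 13) ![0, a, b, c, d, e, g, g, e, d, c, b, a]
    ![x, p, q, r, s, t, u, u, t, s, r, q, p] ![x, p, q, r, s, t, u, u, t, s, r, q, p] = _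
  simp only [tripleSum, Fin.sum_univ_ofNat, Fin.reduceAdd, Fin.isValue, neg_zero, cons_val]
  ring

-- The values `a * b, b * d, …` are those of `i ↦ f i * f (2 * i)`. The claim is checked for each
-- of the `2 ^ 7` choices of signs.
lemma eq_neg_of_tripleSum_evenFun_eq_zero (a b c d e g x : ℤˣ)
    (hzero : let f := evenFun (R := ℤ) 0 a b c d e g
      let h := evenFun (R := ℤ) x (a * b) (b * d) (c * g) (d * e) (e * c) (g * a)
      tripleSum f f f = 0 ∨ tripleSum f f f + 3 * tripleSum f h h = 0) :
    e = -a ∧ c = -b ∧ g = -d := by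
  simp only [tripleSum_evenFun] at hzero
  revert a b c d e g x
  decide +kernel

variable {f h : ZMod 13 → ℤ}

lemma eq_mul_of_apply_two_mul (hsign : ∀ i ≠ 0, IsUnit (f i))
    (hdouble : ∀ i, f (2 * i) = f i * h i) {i : ZMod 13} (hi : i ≠ 0) : h i = f i * f (2 * i) := by
  rw [hdouble, ← mul_assoc, Int.isUnit_mul_self (hsign i hi), one_mul]

lemma apply_five_mul_eq_neg (hf : f.Even) (hf0 : f 0 = 0) (hsign : ∀ i ≠ 0, IsUnit (f i))
    (hh0 : IsUnit (h 0)) (hdouble : ∀ i, f (2 * i) = f i * h i)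
    (hzero : tripleSum f f f = 0 ∨ tripleSum f f f + 3 * tripleSum f h h = 0) (i : ZMod 13) :
    f (5 * i) = -f i := by
  have hmul {i : ZMod 13} (hi : i ≠ 0) := eq_mul_of_apply_two_mul hsign hdouble hi
  have hh : h.Even := fun i => by
    by_cases hi : i = 0
    · rw [hi, neg_zero]
    · rw [hmul hi, hmul (neg_ne_zero.mpr hi), mul_neg, hf, hf]
  obtain ⟨a, ha⟩ := hsign 1 (by decide)
  obtain ⟨b, hb⟩ := hsign 2 (by decide)
  obtain ⟨c, hc⟩ := hsign 3 (by decide)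
  obtain ⟨d, hd⟩ := hsign 4 (by decide)
  obtain ⟨e, he⟩ := hsign 5 (by decide)
  obtain ⟨g, hg⟩ := hsign 6 (by decide)
  obtain ⟨x, hx⟩ := hh0
  have hfvec : f = evenFun (R := ℤ) 0 a b c d e g := by
    rw [ha, hb, hc, hd, he, hg, ← hf0]
    exact eq_evenFun hf
  have hhvec : h = evenFun (R := ℤ) x (a * b) (b * d) (c * g) (d * e) (e * c) (g * a) := by
    rw [eq_evenFun hh, hx, hmul (i := 1) (by decide), hmul (i := 2) (by decide),
      hmul (i := 3) (by decide), hmul (i := 4) (by decide), hmul (i := 5) (by decide),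
      hmul (i := 6) (by decide), hfvec]
    rfl
  rw [hfvec, hhvec] at hzero
  obtain ⟨rfl, rfl, rfl⟩ := eq_neg_of_tripleSum_evenFun_eq_zero a b c d e g x hzero
  rw [hfvec]
  fin_cases i <;> simp [evenFun] <;> rfl

-- The dilation by `5` negates `f` and preserves `h`.
lemma tripleSum_eq_zero_of_apply_five_mul (hsign : ∀ i ≠ 0, IsUnit (f i))
    (hdouble : ∀ i, f (2 * i) = f i * h i) (hfive : ∀ i, f (5 * i) = -f i) :
    tripleSum f f f = 0 ∧ tripleSum f h h = 0 := by
  let dilation : ZMod 13 ≃+ ZMod 13 := AddAut.mulLeft (Units.mk 5 8 (by decide) (by decide))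
  have hh (i : ZMod 13) : h (5 * i) = h i := by
    by_cases hi : i = 0
    · rw [hi, mul_zero]
    have h5i : 5 * i ≠ 0 := dilation.map_ne_zero_iff.mpr hi
    rw [eq_mul_of_apply_two_mul hsign hdouble hi, eq_mul_of_apply_two_mul hsign hdouble h5i,
      mul_left_comm 2, hfive, hfive, neg_mul_neg]
  refine ⟨tripleSum_eq_zero_of_neg_addEquiv dilation fun i j k => ?_,
    tripleSum_eq_zero_of_neg_addEquiv dilation fun i j k => ?_⟩
  · change f (5 * i) * f (5 * j) * f (5 * k) = _
    rw [hfive, hfive, hfive]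
    ring
  · change f (5 * i) * h (5 * j) * h (5 * k) = _
    rw [hfive, hh, hh]
    ring

theorem tripleSum_eq_zero_iff_add_three_mul_eq_zero (hf : f.Even) (hf0 : f 0 = 0)
    (hsign : ∀ i ≠ 0, IsUnit (f i)) (hh0 : IsUnit (h 0)) (hdouble : ∀ i, f (2 * i) = f i * h i) :
    tripleSum f f f = 0 ↔ tripleSum f f f + 3 * tripleSum f h h = 0 := by
  have hvanish (hzero : tripleSum f f f = 0 ∨ tripleSum f f f + 3 * tripleSum f h h = 0) :
      tripleSum f f f = 0 ∧ tripleSum f h h = 0 :=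
    tripleSum_eq_zero_of_apply_five_mul hsign hdouble
      (apply_five_mul_eq_neg hf hf0 hsign hh0 hdouble hzero)
  constructor
  · intro hfff
    rw [hfff, (hvanish (.inl hfff)).2, mul_zero, add_zero]
  · exact fun hsum => (hvanish (.inr hsum)).1

end Thirteen

/-- Theorem 5.1, (i) ↔ (ii): for `q ≡ 1 (mod 52)`, `(q,13)` gives a 3-design iff
`(q,26)` gives a 3-design. -/
theorem stmt_17 (F : Type) [Field F] [Fintype F] [DecidableEq F]
    (q : ℕ) (hq : Fintype.card F = q) (hq52 : q % 52 = 1) :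
    gives3Design F 13 ↔ gives3Design F 26 := by
  have hF : ringChar F ≠ 2 := fun h => by
    have := FiniteField.even_card_of_char_two h
    omega
  have hneg : IsSquare (-1 : F) := FiniteField.isSquare_neg_one_iff.mpr (by omega)
  obtain ⟨ψ, hψ⟩ : ∃ ψ : AddChar (ZMod 13) F, Function.Injective ψ :=
    exists_injective_addChar_zmod (by omega)
  have hodd : Odd (Fintype.card (ZMod 13)) := by
    rw [ZMod.card]
    decide
  have hsq := isSquare_addChar_apply hodd ψ
  refine (gives3Design_card_iff_tripleSum_eq_zero hF (by simp) hψ hsq).trans <|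
    (tripleSum_eq_zero_iff_add_three_mul_eq_zero (gapSign_even hneg hsq) (gapSign_zero ψ)
      (fun i hi => isUnit_gapSign hψ hi) ?_ fun i => ?_).trans
    (gives3Design_two_mul_card_iff hF hneg (by simp) hodd hψ).symm
  · exact isUnit_gapSign (signedChar_injective hF hodd hψ) (by decide)
  · rw [two_mul, ← two_nsmul, gapSign_two_nsmul]
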